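/- Let n ≥ 2, N = 2^{n-1} − 1, let λ_z ∈ [0,1] for z ∈ {0,1}^N, and let Q(·|z) = λ_z δ_{bin_n(2l(z))} + (1−λ_z) δ_{bin_n(2l(z)+1)}. Let p be the product distribution on {0,1}^N with parameters p_j ∈ (0,1) and write q = p^⊤Q ∈ Δ_n with entries (q_0, q_1, …, q_{2N+1}). Then for every i ∈ {1,…,N}: q_{2i} + q_{2i+1} = (1−p_i)∏_{j>i} p_j, q_0 + q_1 = ∏_{j=1}^N p_j, and q_{2i}/q_{2i+1} = (∑_{z: l(z)=i} λ_z ∏_{k<i} p_k^{1−z_k}(1−p_k)^{z_k}) / (∑_{z: l(z)=i} (1−λ_z) ∏_{k<i} p_k^{1−z_k}(1−p_k)^{z_k}) whenever the denominator is nonzero. -/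

import Mathlib

open Finset

/-- The logistic sigmoid function `σ(a) = 1/(1+exp(-a))`. -/
noncomputable def sigmoid (a : ℝ) : ℝ := 1 / (1 + Real.exp (-a))

/-- Real value of a bit. -/
def bval (b : Bool) : ℝ := if b then 1 else 0

/-- The set `F_{k,m}` of Markov kernels representable by a feedforward layer of `m`
sigmoid stochastic units with `k` binary inputs. -/
noncomputable def Fset (k m : ℕ) : Set ((Fin k → Bool) → (Fin m → Bool) → ℝ) :=
  {P | ∃ (V : Fin m → Fin k → ℝ) (c : Fin m → ℝ), ∀ y z,
    P y z = ∏ j, (if z j then sigmoid ((∑ i, V j i * bval (y i)) + c j)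
                  else 1 - sigmoid ((∑ i, V j i * bval (y i)) + c j))}

/-- `Δ_{k,n}`: all Markov kernels from `{0,1}^k` to distributions on `{0,1}^n`. -/
def markovKernels (k n : ℕ) : Set ((Fin k → Bool) → (Fin n → Bool) → ℝ) :=
  {P | (∀ y x, 0 ≤ P y x) ∧ ∀ y, ∑ x, P y x = 1}

/-- Composition of Markov kernels: `(R ∘ Q)(x|y) = ∑_z Q(z|y) R(x|z)`. -/
noncomputable def kcomp {k m n : ℕ} (R : (Fin m → Bool) → (Fin n → Bool) → ℝ)
    (Q : (Fin k → Bool) → (Fin m → Bool) → ℝ) : (Fin k → Bool) → (Fin n → Bool) → ℝ :=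
  fun y x => ∑ z, Q y z * R z x

/-- `Δ_n`: probability distributions on `{0,1}^n`. -/
def simplex (n : ℕ) : Set ((Fin n → Bool) → ℝ) :=
  {p | (∀ x, 0 ≤ p x) ∧ ∑ x, p x = 1}

/-- `Δ_n^+`: strictly positive probability distributions on `{0,1}^n`. -/
def simplexPos (n : ℕ) : Set ((Fin n → Bool) → ℝ) :=
  {p | (∀ x, 0 < p x) ∧ ∑ x, p x = 1}

/-- Mixture `p^⊤ R` of the rows of a kernel `R` with weights `p`. -/
noncomputable def mix {m n : ℕ} (p : (Fin m → Bool) → ℝ)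
    (R : (Fin m → Bool) → (Fin n → Bool) → ℝ) : (Fin n → Bool) → ℝ :=
  fun x => ∑ z, p z * R z x

/-- `E_m`: strictly positive product distributions on `{0,1}^m`, where the `j`-th bit
is `0` with probability `q j ∈ (0,1)`. -/
def Eset (m : ℕ) : Set ((Fin m → Bool) → ℝ) :=
  {p | ∃ q : Fin m → ℝ, (∀ j, q j ∈ Set.Ioo (0:ℝ) 1) ∧
    ∀ z, p z = ∏ j, (if z j then 1 - q j else q j)}

/-- Integer value of a binary vector (bit `i` has weight `2^i`). -/
def intval {k : ℕ} (y : Fin k → Bool) : ℕ := ∑ i, if y i then 2 ^ (i : ℕ) else 0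

/-- `l(z)`: position (1-based) of the largest nonzero entry of `z`, and `0` if `z = 0`. -/
def lidx {N : ℕ} (z : Fin N → Bool) : ℕ :=
  (Finset.univ.filter (fun j => z j = true)).sup (fun j => (j : ℕ) + 1)

/-- `bin_n(l)`: the `n`-bit binary representation of `l`. -/
def binVec (n l : ℕ) : Fin n → Bool := fun i => Nat.testBit l (i : ℕ)

/-- Point measure at `x ∈ {0,1}^n`. -/
noncomputable def deltaAt {n : ℕ} (x : Fin n → Bool) : (Fin n → Bool) → ℝ :=
  fun x' => if x' = x then 1 else 0

/-- The kernel `Q(·|z) = λ_z δ_{bin_n(2l(z))} + (1-λ_z) δ_{bin_n(2l(z)+1)}`. -/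
noncomputable def Qkern (n : ℕ) (lam : (Fin (2 ^ (n - 1) - 1) → Bool) → ℝ) :
    (Fin (2 ^ (n - 1) - 1) → Bool) → (Fin n → Bool) → ℝ :=
  fun z x => lam z * deltaAt (binVec n (2 * lidx z)) x
    + (1 - lam z) * deltaAt (binVec n (2 * lidx z + 1)) x

/-- The entry `q_t` (for `t ∈ {0,…,2^n - 1}`, indexed via `bin_n(t)`) of the mixture
`q = p^⊤Q`, where `p` is the product distribution with parameters `pp`. -/
noncomputable def qEntry (n : ℕ) (lam : (Fin (2 ^ (n - 1) - 1) → Bool) → ℝ)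
    (pp : Fin (2 ^ (n - 1) - 1) → ℝ) (t : ℕ) : ℝ :=
  ∑ z, (∏ j, if z j then 1 - pp j else pp j) * Qkern n lam z (binVec n t)

/-!
Since `l(z) ≤ N`, the indices `2 l(z)` and `2 l(z) + 1` stay below `2 ^ n`, where binary expansion
is injective. Hence `q_{2m}` and `q_{2m+1}` collect exactly the rows `z` with `l(z) = m`, weighted
by `λ_z` and `1 - λ_z`.

The condition `l(z) = i` is a box: the bits below `i` are free, bit `i` is `1`, and the bits above
are `0`. On this box every product weight contains the common factor `(1 - p_i) ∏_{j > i} p_j`. It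
cancels in the ratio, and it is all that remains of the sum `q_{2i} + q_{2i+1}`, because the free
bits contribute `∏_{k < i} (p_k + (1 - p_k)) = 1`.
-/

theorem binVec_injOn (n : ℕ) : Set.InjOn (binVec n) (Set.Iio (2 ^ n)) := by
  intro a ha b hb hab
  calc a = Nat.ofBits (binVec n a) := ((Nat.ofBits_testBit a n).trans (Nat.mod_eq_of_lt ha)).symm
    _ = Nat.ofBits (binVec n b) := by rw [hab]
    _ = b := (Nat.ofBits_testBit b n).trans (Nat.mod_eq_of_lt hb)

theorem deltaAt_binVec {n a b : ℕ} (ha : a < 2 ^ n) (hb : b < 2 ^ n) :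
    deltaAt (binVec n a) (binVec n b) = if b = a then 1 else 0 := by
  simp only [deltaAt, (binVec_injOn n).eq_iff hb ha]

section LeadingBit

variable {N : ℕ}

theorem lidx_le_iff {z : Fin N → Bool} {m : ℕ} : lidx z ≤ m ↔ ∀ j, z j = true → (j : ℕ) < m := by
  simp [lidx, Finset.sup_le_iff]

theorem lidx_le (z : Fin N → Bool) : lidx z ≤ N :=
  lidx_le_iff.2 fun j _ => j.isLt

theorem lidx_eq_zero_iff {z : Fin N → Bool} : lidx z = 0 ↔ z = fun _ => false := by
  rw [← Nat.le_zero, lidx_le_iff, funext_iff]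
  simp

theorem lidx_eq_succ_iff {z : Fin N → Bool} {i : Fin N} :
    lidx z = (i : ℕ) + 1 ↔ z i = true ∧ ∀ j, i < j → z j = false := by
  have lidx_eq_iff_le_and_not_le : lidx z = (i : ℕ) + 1 ↔ lidx z ≤ i + 1 ∧ ¬ lidx z ≤ i := by
    omega
  rw [lidx_eq_iff_le_and_not_le, lidx_le_iff, lidx_le_iff]
  constructor
  · rintro ⟨below, not_below⟩
    push Not at not_below
    obtain ⟨j, hj, hij⟩ := not_below
    obtain rfl : j = i := by have := below j hj; omega
    refine ⟨hj, fun k hk => ?_⟩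
    by_contra hzk
    have := below k (by simpa using hzk)
    omega
  · rintro ⟨hi, above⟩
    refine ⟨fun j hj => ?_, fun h => (h i hi).false⟩
    by_contra hij
    simp [above j (by omega)] at hj

theorem filter_lidx_eq_succ (i : Fin N) :
    ({z | lidx z = (i : ℕ) + 1} : Finset (Fin N → Bool)) =
      Fintype.piFinset fun j => if j < i then univ else {decide (j = i)} := by
  ext z
  simp only [mem_filter_univ, lidx_eq_succ_iff, Fintype.mem_piFinset]
  constructor
  · rintro ⟨hi, above⟩ j
    rcases lt_trichotomy j i with hj | rfl | hj
    · simp [hj]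
    · simp [hi]
    · simp [hj.not_gt, hj.ne', above j hj]
  · intro h
    exact ⟨by simpa using h i, fun j hj => by simpa [hj.not_gt, hj.ne'] using h j⟩

end LeadingBit

theorem prod_univ_eq_prod_Iio_mul_prod_Ioi {ι M : Type*} [Fintype ι] [LinearOrder ι]
    [LocallyFiniteOrderBot ι] [LocallyFiniteOrderTop ι] [CommMonoid M] (i : ι) (f : ι → M) :
    ∏ j, f j = (∏ j ∈ Iio i, f j) * (f i * ∏ j ∈ Ioi i, f j) := by
  rw [mul_prod_Ioi_eq_prod_Ici, ← filter_gt_eq_Iio, ← filter_le_eq_Ici]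
  simpa only [not_lt] using (prod_filter_mul_prod_filter_not univ (· < i) f).symm

section ProductWeights

variable {N : ℕ} {R : Type*}

theorem prod_eq_of_lidx_eq_succ [CommMonoid R] (f : Fin N → Bool → R) {z : Fin N → Bool}
    {i : Fin N} (hz : lidx z = (i : ℕ) + 1) :
    ∏ j, f j (z j) = (∏ j ∈ Iio i, f j (z j)) * (f i true * ∏ j ∈ Ioi i, f j false) := by
  obtain ⟨hi, above⟩ := lidx_eq_succ_iff.1 hz
  rw [prod_univ_eq_prod_Iio_mul_prod_Ioi i, hi]
  congr 2
  exact prod_congr rfl fun j hj => by rw [above j (mem_Ioi.1 hj)]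

theorem sum_mul_prod_of_lidx_eq_succ [CommSemiring R] (f : Fin N → Bool → R)
    (w : (Fin N → Bool) → R) (i : Fin N) :
    ∑ z with lidx z = (i : ℕ) + 1, w z * ∏ j, f j (z j) =
      (∑ z with lidx z = (i : ℕ) + 1, w z * ∏ j ∈ Iio i, f j (z j)) *
        (f i true * ∏ j ∈ Ioi i, f j false) := by
  rw [sum_mul]
  refine sum_congr rfl fun z hz => ?_
  rw [prod_eq_of_lidx_eq_succ f (mem_filter_univ z |>.1 hz), mul_assoc]

theorem sum_prod_of_lidx_eq_succ [CommSemiring R] (f : Fin N → Bool → R) (i : Fin N) :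
    ∑ z with lidx z = (i : ℕ) + 1, ∏ j, f j (z j) =
      (∏ j ∈ Iio i, (f j true + f j false)) * (f i true * ∏ j ∈ Ioi i, f j false) := by
  rw [filter_lidx_eq_succ, ← prod_univ_sum, prod_univ_eq_prod_Iio_mul_prod_Ioi i]
  congr 1
  · exact prod_congr rfl fun j hj => by simp [mem_Iio.1 hj]
  · congr 1
    · simp
    · refine prod_congr rfl fun j hj => ?_
      have hij : i < j := mem_Ioi.1 hj
      simp [hij.not_gt, hij.ne']

theorem sum_prod_of_lidx_eq_zero [CommSemiring R] (f : Fin N → Bool → R) :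
    ∑ z with lidx z = 0, ∏ j, f j (z j) = ∏ j, f j false := by
  simp [lidx_eq_zero_iff, filter_eq']

end ProductWeights

section MixtureEntries

variable {n : ℕ} (lam : (Fin (2 ^ (n - 1) - 1) → Bool) → ℝ)
  (pp : Fin (2 ^ (n - 1) - 1) → ℝ)

theorem two_mul_add_one_lt_two_pow {m : ℕ} (hn : n ≠ 0) (hm : m ≤ 2 ^ (n - 1) - 1) :
    2 * m + 1 < 2 ^ n := by
  have two_pow_pos : 0 < 2 ^ (n - 1) := by positivity
  have two_mul_two_pow : 2 * 2 ^ (n - 1) = 2 ^ n := mul_pow_sub_one hn 2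
  omega

theorem Qkern_binVec_two_mul {m : ℕ} (hn : n ≠ 0) (hm : m ≤ 2 ^ (n - 1) - 1)
    (z : Fin (2 ^ (n - 1) - 1) → Bool) :
    Qkern n lam z (binVec n (2 * m)) = if lidx z = m then lam z else 0 := by
  have hm' := two_mul_add_one_lt_two_pow hn hm
  have hz := two_mul_add_one_lt_two_pow hn (lidx_le z)
  rw [Qkern, deltaAt_binVec (by omega) (by omega), deltaAt_binVec hz (by omega)]
  have same_pair : 2 * m = 2 * lidx z ↔ lidx z = m := by omega
  have even_ne_odd : 2 * m ≠ 2 * lidx z + 1 := by omega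
  simp [same_pair, even_ne_odd]

theorem Qkern_binVec_two_mul_add_one {m : ℕ} (hn : n ≠ 0) (hm : m ≤ 2 ^ (n - 1) - 1)
    (z : Fin (2 ^ (n - 1) - 1) → Bool) :
    Qkern n lam z (binVec n (2 * m + 1)) = if lidx z = m then 1 - lam z else 0 := by
  have hm' := two_mul_add_one_lt_two_pow hn hm
  have hz := two_mul_add_one_lt_two_pow hn (lidx_le z)
  rw [Qkern, deltaAt_binVec (by omega) hm', deltaAt_binVec hz hm']
  have same_pair : 2 * m + 1 = 2 * lidx z + 1 ↔ lidx z = m := by omega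
  have odd_ne_even : 2 * m + 1 ≠ 2 * lidx z := by omega
  simp only [same_pair, odd_ne_even, if_false, mul_zero, zero_add, mul_ite, mul_one]

theorem qEntry_two_mul {m : ℕ} (hn : n ≠ 0) (hm : m ≤ 2 ^ (n - 1) - 1) :
    qEntry n lam pp (2 * m) =
      ∑ z with lidx z = m, lam z * ∏ j, if z j then 1 - pp j else pp j := by
  simp only [qEntry, Qkern_binVec_two_mul lam hn hm, sum_filter, mul_ite, mul_zero,
    mul_comm (lam _)]

theorem qEntry_two_mul_add_one {m : ℕ} (hn : n ≠ 0) (hm : m ≤ 2 ^ (n - 1) - 1) :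
    qEntry n lam pp (2 * m + 1) =
      ∑ z with lidx z = m, (1 - lam z) * ∏ j, if z j then 1 - pp j else pp j := by
  simp only [qEntry, Qkern_binVec_two_mul_add_one lam hn hm, sum_filter, mul_ite, mul_zero,
    mul_comm (1 - lam _)]

theorem qEntry_two_mul_add_qEntry_two_mul_add_one {m : ℕ} (hn : n ≠ 0) (hm : m ≤ 2 ^ (n - 1) - 1) :
    qEntry n lam pp (2 * m) + qEntry n lam pp (2 * m + 1) =
      ∑ z with lidx z = m, ∏ j, if z j then 1 - pp j else pp j := by
  rw [qEntry_two_mul lam pp hn hm, qEntry_two_mul_add_one lam pp hn hm, ← sum_add_distrib]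
  exact sum_congr rfl fun z _ => by ring

theorem qEntry_pair_sum_succ (hn : n ≠ 0) (i : Fin (2 ^ (n - 1) - 1)) :
    qEntry n lam pp (2 * ((i : ℕ) + 1)) + qEntry n lam pp (2 * ((i : ℕ) + 1) + 1) =
      (1 - pp i) * ∏ j ∈ Ioi i, pp j := by
  rw [qEntry_two_mul_add_qEntry_two_mul_add_one lam pp hn i.isLt,
    sum_prod_of_lidx_eq_succ (fun j b => if b then 1 - pp j else pp j)]
  simp

theorem qEntry_pair_sum_zero (hn : n ≠ 0) : qEntry n lam pp 0 + qEntry n lam pp 1 = ∏ j, pp j := by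
  have pair_sum := qEntry_two_mul_add_qEntry_two_mul_add_one lam pp hn (Nat.zero_le _)
  rw [sum_prod_of_lidx_eq_zero (fun j b => if b then 1 - pp j else pp j)] at pair_sum
  simpa using pair_sum

theorem qEntry_ratio (hn : n ≠ 0) {i : Fin (2 ^ (n - 1) - 1)} (hi : pp i ≠ 1)
    (above : ∀ j, i < j → pp j ≠ 0) :
    qEntry n lam pp (2 * ((i : ℕ) + 1)) / qEntry n lam pp (2 * ((i : ℕ) + 1) + 1) =
      (∑ z with lidx z = (i : ℕ) + 1, lam z * ∏ k ∈ Iio i, if z k then 1 - pp k else pp k) /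
        ∑ z with lidx z = (i : ℕ) + 1,
          (1 - lam z) * ∏ k ∈ Iio i, if z k then 1 - pp k else pp k := by
  have common_factor_ne_zero : (1 - pp i) * ∏ j ∈ Ioi i, pp j ≠ 0 :=
    mul_ne_zero (sub_ne_zero.2 hi.symm) (prod_ne_zero_iff.2 fun j hj => above j (mem_Ioi.1 hj))
  rw [qEntry_two_mul lam pp hn i.isLt, qEntry_two_mul_add_one lam pp hn i.isLt,
    sum_mul_prod_of_lidx_eq_succ (fun j b => if b then 1 - pp j else pp j),
    sum_mul_prod_of_lidx_eq_succ (fun j b => if b then 1 - pp j else pp j)]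
  exact mul_div_mul_right _ _ common_factor_ne_zero

end MixtureEntries

theorem pairwise_mixture_entries_general {n : ℕ} (hn : n ≠ 0)
    (lam : (Fin (2 ^ (n - 1) - 1) → Bool) → ℝ) (pp : Fin (2 ^ (n - 1) - 1) → ℝ) :
    (∀ i : Fin (2 ^ (n - 1) - 1),
      qEntry n lam pp (2 * ((i : ℕ) + 1)) + qEntry n lam pp (2 * ((i : ℕ) + 1) + 1) =
        (1 - pp i) * ∏ j ∈ Ioi i, pp j) ∧
    qEntry n lam pp 0 + qEntry n lam pp 1 = ∏ j, pp j ∧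
    ∀ i : Fin (2 ^ (n - 1) - 1), pp i ≠ 1 → (∀ j, i < j → pp j ≠ 0) →
      ∑ z with lidx z = (i : ℕ) + 1,
        (1 - lam z) * ∏ k ∈ Iio i, (if z k then 1 - pp k else pp k) ≠ 0 →
      qEntry n lam pp (2 * ((i : ℕ) + 1)) / qEntry n lam pp (2 * ((i : ℕ) + 1) + 1) =
        (∑ z with lidx z = (i : ℕ) + 1, lam z * ∏ k ∈ Iio i, if z k then 1 - pp k else pp k) /
          ∑ z with lidx z = (i : ℕ) + 1,
            (1 - lam z) * ∏ k ∈ Iio i, if z k then 1 - pp k else pp k :=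
  ⟨qEntry_pair_sum_succ lam pp hn, qEntry_pair_sum_zero lam pp hn,
    fun _ hi above _ => qEntry_ratio lam pp hn hi above⟩

/-- Computation of the mixture `q = p^⊤Q` for the pairwise-mixture kernel: the pair sums
`q_{2i} + q_{2i+1}`, the pair sum `q_0 + q_1`, and the ratios `q_{2i}/q_{2i+1}`
(1-based `i ∈ {1,…,N}` is represented by `i : Fin N` via `i+1`). -/
theorem pairwise_mixture_entries
    (n : ℕ) (hn : 2 ≤ n)
    (lam : (Fin (2 ^ (n - 1) - 1) → Bool) → ℝ) (hlam : ∀ z, lam z ∈ Set.Icc (0:ℝ) 1)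
    (pp : Fin (2 ^ (n - 1) - 1) → ℝ) (hpp : ∀ j, pp j ∈ Set.Ioo (0:ℝ) 1) :
    (∀ i : Fin (2 ^ (n - 1) - 1),
      qEntry n lam pp (2 * ((i : ℕ) + 1)) + qEntry n lam pp (2 * ((i : ℕ) + 1) + 1)
        = (1 - pp i) * ∏ j ∈ Finset.univ.filter (fun j => i < j), pp j) ∧
    (qEntry n lam pp 0 + qEntry n lam pp 1 = ∏ j, pp j) ∧
    (∀ i : Fin (2 ^ (n - 1) - 1),
      (∑ z ∈ Finset.univ.filter (fun z => lidx z = (i : ℕ) + 1),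
          (1 - lam z) * ∏ kk ∈ Finset.univ.filter (fun kk => kk < i),
            (if z kk then 1 - pp kk else pp kk)) ≠ 0 →
      qEntry n lam pp (2 * ((i : ℕ) + 1)) / qEntry n lam pp (2 * ((i : ℕ) + 1) + 1)
        = (∑ z ∈ Finset.univ.filter (fun z => lidx z = (i : ℕ) + 1),
            lam z * ∏ kk ∈ Finset.univ.filter (fun kk => kk < i),
              (if z kk then 1 - pp kk else pp kk))
          / (∑ z ∈ Finset.univ.filter (fun z => lidx z = (i : ℕ) + 1),
              (1 - lam z) * ∏ kk ∈ Finset.univ.filter (fun kk => kk < i),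
                (if z kk then 1 - pp kk else pp kk))) := by
  simp only [filter_lt_eq_Ioi, filter_gt_eq_Iio]
  obtain ⟨pair_sum_succ, pair_sum_zero, ratio⟩ :=
    pairwise_mixture_entries_general (by omega : n ≠ 0) lam pp
  exact ⟨pair_sum_succ, pair_sum_zero, fun i => ratio i (hpp i).2.ne fun j _ => (hpp j).1.ne'⟩
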